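/- arXiv:1506.00263 — 4 statements merged into one kernel-verified Lean document; each statement's English description precedes it below -/
import Mathlib

section
/- Let M be an epi-retractable R-module. If M satisfies the (**) property, that is, every nonzero R-linear endomorphism of M is surjective, then M is coretractable. -/
/-- An `R`-module `M` is coretractable if for every proper submodule `K` of `M`
there exists a nonzero `R`-linear map from `M ⧸ K` to `M`. -/
def Coretractable (R : Type*) (M : Type*) [Ring R] [AddCommGroup M] [Module R M] : Prop :=
  ∀ K : Submodule R M, K ≠ ⊤ → ∃ f : (M ⧸ K) →ₗ[R] M, f ≠ 0

/-- An `R`-module `M` is epi-retractable if every submodule of `M` is a homomorphic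
image of `M`. -/
def EpiRetractable (R : Type*) (M : Type*) [Ring R] [AddCommGroup M] [Module R M] : Prop :=
  ∀ N : Submodule R M, ∃ f : M →ₗ[R] N, Function.Surjective f

/-! Composing a surjection `M → N` with the inclusion of `N` exhibits every submodule `N` of an
epi-retractable module `M` as the range of an endomorphism. If nonzero endomorphisms are surjective,
`N` is therefore `⊥` or `⊤`, so `M` is semisimple. For a semisimple `M`, the quotient `M ⧸ K`
embeds in `M` as a complement of `K`, and this embedding is nonzero when `K` is proper. -/

section

variable {R : Type*} [Ring R] {M : Type*} [AddCommGroup M] [Module R M]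

theorem EpiRetractable.exists_range_eq (h : EpiRetractable R M) (N : Submodule R M) :
    ∃ f : M →ₗ[R] M, LinearMap.range f = N := by
  obtain ⟨g, hg⟩ := h N
  exact ⟨N.subtype ∘ₗ g, by
    rw [LinearMap.range_comp_of_range_eq_top _ (LinearMap.range_eq_top.2 hg), N.range_subtype]⟩

theorem EpiRetractable.eq_bot_or_eq_top (h : EpiRetractable R M)
    (hsurj : ∀ f : M →ₗ[R] M, f ≠ 0 → Function.Surjective f) (N : Submodule R M) :
    N = ⊥ ∨ N = ⊤ := by
  obtain ⟨f, rfl⟩ := h.exists_range_eq N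
  rw [LinearMap.range_eq_bot, LinearMap.range_eq_top]
  exact or_iff_not_imp_left.2 (hsurj f)

theorem EpiRetractable.isSemisimpleModule (h : EpiRetractable R M)
    (hsurj : ∀ f : M →ₗ[R] M, f ≠ 0 → Function.Surjective f) :
    IsSemisimpleModule R M where
  exists_isCompl N := by
    rcases h.eq_bot_or_eq_top hsurj N with rfl | rfl
    · exact ⟨⊤, isCompl_bot_top⟩
    · exact ⟨⊥, isCompl_top_bot⟩

theorem coretractable_of_isSemisimpleModule [IsSemisimpleModule R M] : Coretractable R M := by
  intro K hK
  obtain ⟨C, hC⟩ := exists_isCompl K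
  have : Nontrivial (M ⧸ K) := Submodule.Quotient.nontrivial_iff.2 hK
  let f : (M ⧸ K) →ₗ[R] M := C.subtype ∘ₗ (K.quotientEquivOfIsCompl C hC).toLinearMap
  have hf : Function.Injective f :=
    C.injective_subtype.comp (K.quotientEquivOfIsCompl C hC).injective
  exact ⟨f, LinearMap.ne_zero_of_injective hf⟩

end

theorem epiRetractable_starstar_imp_coretractable {R : Type*} [Ring R] {M : Type*}
    [AddCommGroup M] [Module R M] (h : EpiRetractable R M)
    (hss : ∀ f : M →ₗ[R] M, f ≠ 0 → Function.Surjective f) :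
    Coretractable R M := by
  have : IsSemisimpleModule R M := h.isSemisimpleModule hss
  exact coretractable_of_isSemisimpleModule
end

section
/- Let R be a commutative Artinian ring. Then R is a Kasch ring: every simple R-module admits an injective R-linear map into R. -/
/-!
A simple module `M` is `R ⧸ I` for the maximal ideal `I = Ann M`, so `M` embeds in `N` exactly when
`I` is the annihilator of an element of `N`. An Artinian ring `R` is Noetherian and its
non-zero-divisors are units. Hence a maximal ideal consists of zero divisors, so it lies in the
finite union of the associated primes of `R`; by prime avoidance it is one of them.
-/

theorem exists_injective_linearMap_iff_annihilator_mem_associatedPrimes {R M N : Type*} [CommRing R]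
    [IsNoetherianRing R] [AddCommGroup M] [Module R M] [IsSimpleModule R M] [AddCommGroup N]
    [Module R N] :
    (∃ f : M →ₗ[R] N, Function.Injective f) ↔ Module.annihilator R M ∈ associatedPrimes R N := by
  obtain ⟨I, hI, ⟨e⟩⟩ := isSimpleModule_iff_quot_maximal.mp ‹IsSimpleModule R M›
  rw [e.annihilator_eq, Ideal.annihilator_quotient, AssociatedPrimes.mem_iff,
    isAssociatedPrime_iff_exists_injective_linearMap, and_iff_right hI.isPrime]
  exact ⟨fun ⟨f, hf⟩ ↦ ⟨f ∘ₗ e.symm.toLinearMap, hf.comp e.symm.injective⟩,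
    fun ⟨g, hg⟩ ↦ ⟨g ∘ₗ e.toLinearMap, hg.comp e.injective⟩⟩

theorem isFractionRing_self_of_isArtinianRing (R : Type*) [CommRing R] [IsArtinianRing R] :
    IsFractionRing R R :=
  IsFractionRing.self_iff_nonZeroDivisors_le_isUnit.mpr fun _ ↦
    IsArtinianRing.isUnit_of_mem_nonZeroDivisors

theorem commArtinian_isKasch_general {R : Type*} [CommRing R] [IsNoetherianRing R]
    [IsFractionRing R R] (M : Type*) [AddCommGroup M] [Module R M] [IsSimpleModule R M] :
    ∃ f : M →ₗ[R] R, Function.Injective f := by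
  have : (Module.annihilator R M).IsMaximal := IsSimpleModule.annihilator_isMaximal
  exact exists_injective_linearMap_iff_annihilator_mem_associatedPrimes.mpr
    (Ideal.IsMaximal.mem_associatedPrimes_of_isFractionRing R _)

theorem commArtinian_isKasch {R : Type u} [CommRing R] [IsArtinianRing R] :
    ∀ (M : Type u) [AddCommGroup M] [Module R M], IsSimpleModule R M →
      ∃ f : M →ₗ[R] R, Function.Injective f := by
  intro M _ _ _
  have := isFractionRing_self_of_isArtinianRing R
  exact commArtinian_isKasch_general M
end

section
/- Let R be a commutative Artinian ring. Then R, regarded as a module over itself, is coretractable: for every proper ideal I of R there exists a nonzero R-linear map from R/I to R. -/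
/-!
Over a commutative Artinian ring, the Jacobson radical is nilpotent with semisimple quotient, so a
proper submodule `K` of a module `M` lies in a maximal submodule `P` even when `M` is not finitely
generated. The simple module `M ⧸ P` is `R ⧸ m` for a maximal ideal `m` in the support of `M`. As
all primes are maximal, `m` is minimal in the support, hence an associated prime, so `M ⧸ P` embeds
into `M`. The composite `M ⧸ K → M ⧸ P → M` is nonzero.
-/

section Coatoms

variable (R M : Type*) [Ring R] [IsSemiprimaryRing R] [AddCommGroup M] [Module R M]

theorem exists_isCoatom_submodule [Nontrivial M] : ∃ P : Submodule R M, IsCoatom P := by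
  suffices coatom_of_nontrivial : Nontrivial M → ∃ P : Submodule R M, IsCoatom P from
    coatom_of_nontrivial ‹_›
  refine IsSemiprimaryRing.induction
    (P := fun M _ _ _ ↦ Nontrivial M → ∃ P : Submodule R M, IsCoatom P) R R M ?_ ?_
  · intro M _ _ _ _ _ _ _
    obtain ⟨P, hP, -⟩ := (eq_top_or_exists_le_coatom (⊥ : Submodule R M)).resolve_left bot_ne_top
    exact ⟨P, hP⟩
  · intro M _ _ _ _ N coatom_of_radical coatom_of_quotient _
    by_cases hN : N = ⊤
    · let e : M ≃ₗ[R] N := (LinearEquiv.ofTop N hN).symm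
      obtain ⟨P, hP⟩ := coatom_of_radical e.symm.toEquiv.nontrivial
      exact ⟨P.comap e.toLinearMap, (Submodule.isCoatom_comap_iff e.surjective).mpr hP⟩
    · obtain ⟨P, hP⟩ := coatom_of_quotient (Submodule.Quotient.nontrivial_iff.mpr hN)
      exact ⟨P.comap N.mkQ, (Submodule.isCoatom_comap_iff N.mkQ_surjective).mpr hP⟩

theorem isCoatomic_submodule : IsCoatomic (Submodule R M) where
  eq_top_or_exists_le_coatom K := by
    refine or_iff_not_imp_left.mpr fun hK ↦ ?_
    have := Submodule.Quotient.nontrivial_iff.mpr hK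
    obtain ⟨P, hP⟩ := exists_isCoatom_submodule R (M ⧸ K)
    exact ⟨P.comap K.mkQ, (Submodule.isCoatom_comap_iff K.mkQ_surjective).mpr hP,
      K.le_comap_mkQ P⟩

end Coatoms

section AssociatedPrimes

variable {R M : Type*} [CommRing R] [AddCommGroup M] [Module R M] {p : PrimeSpectrum R}

theorem isAssociatedPrime_of_minimal_mem_support [IsNoetherianRing R]
    (hp : Minimal (· ∈ Module.support R M) p) : IsAssociatedPrime p.asIdeal M := by
  obtain ⟨x, hx⟩ := Module.mem_support_iff_exists_annihilator.mp hp.prop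
  have mem_minimalPrimes : p.asIdeal ∈ (R ∙ x).annihilator.minimalPrimes := by
    refine ⟨⟨p.isPrime, hx⟩, fun q ⟨hq, hxq⟩ hqp ↦ ?_⟩
    have q_mem_support : ⟨q, hq⟩ ∈ Module.support R M :=
      Module.mem_support_iff_exists_annihilator.mpr ⟨x, hxq⟩
    exact hp.le_of_le q_mem_support hqp
  rw [← Submodule.bot_colon'] at mem_minimalPrimes
  exact isAssociatedPrime_iff.mpr
    ⟨p.isPrime, Submodule.exists_eq_colon_of_mem_minimalPrimes mem_minimalPrimes⟩

theorem isAssociatedPrime_of_mem_support [IsArtinianRing R] (hp : p ∈ Module.support R M) :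
    IsAssociatedPrime p.asIdeal M :=
  isAssociatedPrime_of_minimal_mem_support ⟨hp, fun q _ hqp ↦
    ((IsArtinianRing.isMaximal_of_isPrime q.asIdeal).eq_of_le p.isPrime.ne_top hqp).ge⟩

theorem exists_injective_linearMap_of_isSimpleModule_of_surjective [IsArtinianRing R] {S : Type*}
    [AddCommGroup S] [Module R S] [IsSimpleModule R S] (g : M →ₗ[R] S)
    (hg : Function.Surjective g) : ∃ f : S →ₗ[R] M, Function.Injective f := by
  obtain ⟨m, hm, ⟨e⟩⟩ := isSimpleModule_iff_quot_maximal.mp ‹IsSimpleModule R S›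
  have m_mem_support : ⟨m, hm.isPrime⟩ ∈ Module.support R M := by
    refine Module.support_subset_of_surjective g hg ?_
    rw [e.support_eq, Module.support_eq_zeroLocus, Ideal.annihilator_quotient]
    exact Set.Subset.rfl
  obtain ⟨-, f, hf⟩ := (isAssociatedPrime_iff_exists_injective_linearMap m M).mp
    (isAssociatedPrime_of_mem_support m_mem_support)
  exact ⟨f ∘ₗ e.toLinearMap, hf.comp e.injective⟩

end AssociatedPrimes

theorem commArtinian_coretractable_general {R M : Type*} [CommRing R] [IsArtinianRing R]
    [AddCommGroup M] [Module R M] : Coretractable R M := by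
  intro K hK
  have := isCoatomic_submodule R M
  obtain ⟨P, hP, hKP⟩ := (eq_top_or_exists_le_coatom K).resolve_left hK
  have : IsSimpleModule R (M ⧸ P) := isSimpleModule_iff_isCoatom.mpr hP
  have := IsSimpleModule.nontrivial R (M ⧸ P)
  obtain ⟨f, hf⟩ :=
    exists_injective_linearMap_of_isSimpleModule_of_surjective P.mkQ P.mkQ_surjective
  have f_ne_zero : f ≠ 0 := LinearMap.ne_zero_of_injective hf
  refine ⟨f ∘ₗ Submodule.factor hKP, ?_⟩
  contrapose! f_ne_zero
  rwa [← LinearMap.cancel_right (Submodule.factor_surjective hKP), LinearMap.zero_comp]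

theorem commArtinian_coretractable {R : Type*} [CommRing R] [IsArtinianRing R] :
    Coretractable R R :=
  commArtinian_coretractable_general
end

section
/- Let M be a nonsingular uniform R-module that possesses a nonzero proper submodule. Then M is not mono-coretractable; in fact, for every nonzero submodule N of M, every R-linear map from M/N to M is zero. -/
/-!
In a uniform module every nonzero submodule is essential, and essential submodules pull back to
essential submodules along linear maps. For `m : M` and an essential submodule `N`, pulling `N` back
along `r ↦ r • m` shows that the annihilator of `m + N` is essential, so every element of `M ⧸ N` is
singular. Linear maps preserve singular elements, hence every linear map from `M ⧸ N` to a
nonsingular module is zero. If `N` is also proper, then `M ⧸ N ≠ 0` and no such map is injective.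
-/

/-- An `R`-module `M` is mono-coretractable if for every submodule `N` of `M`
there exists an injective `R`-linear map from `M ⧸ N` to `M`. -/
def MonoCoretractable (R : Type*) (M : Type*) [Ring R] [AddCommGroup M] [Module R M] : Prop :=
  ∀ N : Submodule R M, ∃ f : (M ⧸ N) →ₗ[R] M, Function.Injective f

section Semiring

variable {R M M' : Type*} [Semiring R] [AddCommMonoid M] [Module R M] [AddCommMonoid M']
  [Module R M']

/-- A submodule is essential if it meets every nonzero submodule nontrivially. For `M = R` this is
the notion of an essential left ideal, through which singular elements are defined. -/
def IsEssentialSubmodule (N : Submodule R M) : Prop :=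
  ∀ P : Submodule R M, P ≠ ⊥ → N ⊓ P ≠ ⊥

theorem IsEssentialSubmodule.mono {N N' : Submodule R M} (hN : IsEssentialSubmodule N)
    (hle : N ≤ N') : IsEssentialSubmodule N' :=
  fun P hP => ne_bot_of_le_ne_bot (hN P hP) (inf_le_inf_right P hle)

theorem IsEssentialSubmodule.comap {N : Submodule R M'} (hN : IsEssentialSubmodule N)
    (f : M →ₗ[R] M') : IsEssentialSubmodule (N.comap f) := by
  intro P hP hinf
  have hmap_inf : N ⊓ P.map f = ⊥ := by
    rw [inf_comm, Submodule.map_inf_eq_map_inf_comap, inf_comm, hinf, Submodule.map_bot]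
  have hmap : P.map f = ⊥ := by_contra fun hne => hN (P.map f) hne hmap_inf
  have hle : P ≤ N.comap f := Submodule.map_le_iff_le_comap.1 (hmap.trans_le bot_le)
  exact hP (by rwa [inf_eq_right.2 hle] at hinf)

variable (R) in
/-- An element of a module is singular if its annihilator, here `Ideal.torsionOf`, is an essential
left ideal. -/
def IsSingularElement (m : M) : Prop :=
  IsEssentialSubmodule (Ideal.torsionOf R M m)

theorem IsSingularElement.map {m : M} (hm : IsSingularElement R m) (f : M →ₗ[R] M') :
    IsSingularElement R (f m) := by
  refine IsEssentialSubmodule.mono hm fun r hr => ?_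
  rw [Ideal.mem_torsionOf_iff] at hr ⊢
  rw [← map_smul, hr, map_zero]

variable (R M) in
/-- A module is nonsingular if zero is its only singular element; such modules receive only the zero
map from a quotient by an essential submodule. -/
def IsNonsingularModule : Prop :=
  ∀ m : M, IsSingularElement R m → m = 0

end Semiring

section Ring

variable {R M M' : Type*} [Ring R] [AddCommGroup M] [Module R M]

theorem IsEssentialSubmodule.isSingularElement_quotient {N : Submodule R M}
    (hN : IsEssentialSubmodule N) (x : M ⧸ N) : IsSingularElement R x := by
  obtain ⟨m, rfl⟩ := Submodule.Quotient.mk_surjective N x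
  have htorsion : Ideal.torsionOf R (M ⧸ N) (Submodule.Quotient.mk m) =
      N.comap (LinearMap.toSpanSingleton R M m) := by
    ext r
    rw [Ideal.mem_torsionOf_iff, Submodule.mem_comap, LinearMap.toSpanSingleton_apply,
      ← Submodule.Quotient.mk_smul, Submodule.Quotient.mk_eq_zero]
  rw [IsSingularElement, htorsion]
  exact hN.comap _

theorem IsNonsingularModule.linearMap_quotient_eq_zero [AddCommMonoid M'] [Module R M']
    (hM' : IsNonsingularModule R M') {N : Submodule R M} (hN : IsEssentialSubmodule N)
    (f : (M ⧸ N) →ₗ[R] M') : f = 0 :=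
  LinearMap.ext fun x => hM' (f x) ((hN.isSingularElement_quotient x).map f)

theorem MonoCoretractable.eq_top_of_forall_linearMap_eq_zero (hM : MonoCoretractable R M)
    {N : Submodule R M} (hN : ∀ f : (M ⧸ N) →ₗ[R] M, f = 0) : N = ⊤ := by
  obtain ⟨f, hf⟩ := hM N
  rw [hN f] at hf
  exact Submodule.Quotient.subsingleton_iff.1 ⟨fun x y => hf rfl⟩

theorem nonsingular_uniform_not_monoCoretractable_general (hM : IsNonsingularModule R M)
    (hprop : ∃ L : Submodule R M, IsEssentialSubmodule L ∧ L ≠ ⊤) :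
    ¬ MonoCoretractable R M ∧
      ∀ N : Submodule R M, IsEssentialSubmodule N → ∀ f : (M ⧸ N) →ₗ[R] M, f = 0 := by
  refine ⟨fun hmono => ?_, fun N hN => hM.linearMap_quotient_eq_zero hN⟩
  obtain ⟨L, hL, hL_top⟩ := hprop
  exact hL_top (hmono.eq_top_of_forall_linearMap_eq_zero (hM.linearMap_quotient_eq_zero hL))

end Ring

theorem nonsingular_uniform_not_monoCoretractable {R : Type*} [Ring R] {M : Type*}
    [AddCommGroup M] [Module R M]
    -- M is nonsingular: every element whose annihilator is an essential ideal is zero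
    (hns : ∀ m : M, (∀ J : Ideal R, J ≠ ⊥ → Ideal.torsionOf R M m ⊓ J ≠ ⊥) → m = 0)
    -- M is uniform: any two nonzero submodules intersect nontrivially
    (hunif : ∀ P Q : Submodule R M, P ≠ ⊥ → Q ≠ ⊥ → P ⊓ Q ≠ ⊥)
    -- M has a nonzero proper submodule
    (hprop : ∃ L : Submodule R M, L ≠ ⊥ ∧ L ≠ ⊤) :
    ¬ MonoCoretractable R M ∧
      ∀ N : Submodule R M, N ≠ ⊥ → ∀ f : (M ⧸ N) →ₗ[R] M, f = 0 := by
  refine (nonsingular_uniform_not_monoCoretractable_general hns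
    (hprop.imp fun L hL => ⟨fun P => hunif L P hL.1, hL.2⟩)).imp_right fun hzero N hN => ?_
  exact hzero N fun P => hunif N P hN
end
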